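/- Let φ₁ be a GF²-sentence and let Θ be the set of pairs (τ,M) with τ an atomic 2-type for sig(φ₁) and M ∈ {0,1}. There exists a two-way alternating tree automaton (2ATA) 𝒜₁ over the alphabet Θ such that 𝒜₁ accepts a Θ-labeled tree (T,L) if and only if the structure 𝔄_{(T,L)} represented by (T,L) is a model of φ₁. -/

import Mathlib

/-! Core: relational two-variable first-order logic with equality (unary and
binary predicates only), the guarded fragment GF², structures, satisfaction,
atomic types, (bounded/delimited) guarded bisimulations, forest structures. -/

namespace GFC

inductive Var : Type
  | x
  | y
deriving DecidableEq

/-- Formulas of two-variable relational FO with equality (variables `x`, `y`). -/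
inductive Fml (U B : Type) : Type
  | uatom : U → Var → Fml U B
  | batom : B → Var → Var → Fml U B
  | eqv   : Var → Var → Fml U B
  | fls   : Fml U B
  | neg   : Fml U B → Fml U B
  | conj  : Fml U B → Fml U B → Fml U B
  | disj  : Fml U B → Fml U B → Fml U B
  | impl  : Fml U B → Fml U B → Fml U B
  | all   : Var → Fml U B → Fml U B
  | ex    : Var → Fml U B → Fml U B

namespace Fml

variable {U B : Type}

def free : Fml U B → Set Var
  | uatom _ v => {v}
  | batom _ v w => {v, w}
  | eqv v w => {v, w}
  | fls => ∅
  | neg φ => φ.free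
  | conj φ ψ => φ.free ∪ ψ.free
  | disj φ ψ => φ.free ∪ ψ.free
  | impl φ ψ => φ.free ∪ ψ.free
  | all v φ => φ.free \ {v}
  | ex v φ => φ.free \ {v}

def IsSentence (φ : Fml U B) : Prop := φ.free = ∅

def upreds : Fml U B → Set U
  | uatom P _ => {P}
  | batom _ _ _ => ∅
  | eqv _ _ => ∅
  | fls => ∅
  | neg φ => φ.upreds
  | conj φ ψ => φ.upreds ∪ ψ.upreds
  | disj φ ψ => φ.upreds ∪ ψ.upreds
  | impl φ ψ => φ.upreds ∪ ψ.upreds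
  | all _ φ => φ.upreds
  | ex _ φ => φ.upreds

def bpreds : Fml U B → Set B
  | uatom _ _ => ∅
  | batom R _ _ => {R}
  | eqv _ _ => ∅
  | fls => ∅
  | neg φ => φ.bpreds
  | conj φ ψ => φ.bpreds ∪ ψ.bpreds
  | disj φ ψ => φ.bpreds ∪ ψ.bpreds
  | impl φ ψ => φ.bpreds ∪ ψ.bpreds
  | all _ φ => φ.bpreds
  | ex _ φ => φ.bpreds

def IsAtom : Fml U B → Prop
  | uatom _ _ => True
  | batom _ _ _ => True
  | eqv _ _ => True
  | _ => False

def IsEqAtom : Fml U B → Prop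
  | eqv _ _ => True
  | _ => False

/-- guarded quantifier depth (in GF² formulas every quantifier is guarded) -/
def gdepth : Fml U B → ℕ
  | uatom _ _ => 0
  | batom _ _ _ => 0
  | eqv _ _ => 0
  | fls => 0
  | neg φ => φ.gdepth
  | conj φ ψ => max φ.gdepth ψ.gdepth
  | disj φ ψ => max φ.gdepth ψ.gdepth
  | impl φ ψ => max φ.gdepth ψ.gdepth
  | all _ φ => φ.gdepth + 1
  | ex _ φ => φ.gdepth + 1

/-- subformulas (including the formula itself) -/
def Subf : Fml U B → Set (Fml U B)
  | uatom P v => {uatom P v}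
  | batom R v w => {batom R v w}
  | eqv v w => {eqv v w}
  | fls => {fls}
  | neg φ => insert (neg φ) φ.Subf
  | conj φ ψ => insert (conj φ ψ) (φ.Subf ∪ ψ.Subf)
  | disj φ ψ => insert (disj φ ψ) (φ.Subf ∪ ψ.Subf)
  | impl φ ψ => insert (impl φ ψ) (φ.Subf ∪ ψ.Subf)
  | all v φ => insert (all v φ) φ.Subf
  | ex v φ => insert (ex v φ) φ.Subf

/-- rename the free variables along `f` (bound variables untouched) -/
def renameFree : (Var → Var) → Fml U B → Fml U B
  | f, uatom P v => uatom P (f v)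
  | f, batom R v w => batom R (f v) (f w)
  | f, eqv v w => eqv (f v) (f w)
  | _, fls => fls
  | f, neg φ => neg (renameFree f φ)
  | f, conj φ ψ => conj (renameFree f φ) (renameFree f ψ)
  | f, disj φ ψ => disj (renameFree f φ) (renameFree f ψ)
  | f, impl φ ψ => impl (renameFree f φ) (renameFree f ψ)
  | f, all v φ => all v (renameFree (Function.update f v v) φ)
  | f, ex v φ => ex v (renameFree (Function.update f v v) φ)

end Fml

/-- The two-variable guarded fragment GF²: quantification only in the guarded
patterns `∀v (α → φ)` and `∃v (α ∧ φ)` with `α` an atom containing all free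
variables of `φ` as well as the quantified variable `v`. -/
inductive IsGF2 {U B : Type} : Fml U B → Prop
  | uatom (P : U) (v : Var) : IsGF2 (.uatom P v)
  | batom (R : B) (v w : Var) : IsGF2 (.batom R v w)
  | eqv (v w : Var) : IsGF2 (.eqv v w)
  | fls : IsGF2 .fls
  | neg {φ} : IsGF2 φ → IsGF2 (.neg φ)
  | conj {φ ψ} : IsGF2 φ → IsGF2 ψ → IsGF2 (.conj φ ψ)
  | disj {φ ψ} : IsGF2 φ → IsGF2 ψ → IsGF2 (.disj φ ψ)
  | impl {φ ψ} : IsGF2 φ → IsGF2 ψ → IsGF2 (.impl φ ψ)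
  | allG {v : Var} {α φ : Fml U B} :
      α.IsAtom → IsGF2 φ → φ.free ∪ {v} ⊆ α.free → IsGF2 (.all v (.impl α φ))
  | exG {v : Var} {α φ : Fml U B} :
      α.IsAtom → IsGF2 φ → φ.free ∪ {v} ⊆ α.free → IsGF2 (.ex v (.conj α φ))

/-- openGF²: GF² formulas with exactly one free variable, in which equality is
never used as a guard and which contain no subformula that is a sentence. -/
def IsOpenGF2 {U B : Type} (φ : Fml U B) : Prop :=
  IsGF2 φ ∧ (∃ v, φ.free = {v}) ∧
  (∀ ψ ∈ φ.Subf, ¬ ψ.IsSentence) ∧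
  (∀ ψ ∈ φ.Subf, ∀ (v : Var) (α χ : Fml U B),
      (ψ = .all v (.impl α χ) ∨ ψ = .ex v (.conj α χ)) → ¬ α.IsEqAtom)

/-- relational structures interpreting unary predicates `U` and binary
predicates `B` -/
structure Str (U B : Type) where
  Dom : Type
  nonempty : Nonempty Dom
  u : U → Dom → Prop
  b : B → Dom → Dom → Prop

def upd {D : Type} (σ : Var → D) (v : Var) (d : D) : Var → D :=
  fun w => if w = v then d else σ w

def Sat {U B : Type} (A : Str U B) : Fml U B → (Var → A.Dom) → Prop
  | .uatom P v, σ => A.u P (σ v)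
  | .batom R v w, σ => A.b R (σ v) (σ w)
  | .eqv v w, σ => σ v = σ w
  | .fls, _ => False
  | .neg φ, σ => ¬ Sat A φ σ
  | .conj φ ψ, σ => Sat A φ σ ∧ Sat A ψ σ
  | .disj φ ψ, σ => Sat A φ σ ∨ Sat A ψ σ
  | .impl φ ψ, σ => Sat A φ σ → Sat A ψ σ
  | .all v φ, σ => ∀ d : A.Dom, Sat A φ (upd σ v d)
  | .ex v φ, σ => ∃ d : A.Dom, Sat A φ (upd σ v d)

/-- truth of a sentence in a structure -/
def SatS {U B : Type} (A : Str U B) (φ : Fml U B) : Prop := ∀ σ, Sat A φ σ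

def Entails {U B : Type} (φ ψ : Fml U B) : Prop :=
  ∀ A : Str U B, SatS A φ → SatS A ψ

def Satisfiable {U B : Type} (φ : Fml U B) : Prop := ∃ A : Str U B, SatS A φ

/-- a GF²(Σ)-sentence, for the signature Σ = (SU, SB) -/
def IsGF2Sentence {U B : Type} (SU : Set U) (SB : Set B) (ψ : Fml U B) : Prop :=
  IsGF2 ψ ∧ ψ.IsSentence ∧ ψ.upreds ⊆ SU ∧ ψ.bpreds ⊆ SB

/-- `φ₁ ⊨_Σ φ₂` : GF²(Σ)-entailment -/
def GF2Entails {U B : Type} (SU : Set U) (SB : Set B) (φ₁ φ₂ : Fml U B) : Prop :=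
  ∀ ψ : Fml U B, IsGF2Sentence SU SB ψ → Entails φ₂ ψ → Entails φ₁ ψ

/-- atomic formulas in the variables x, y -/
inductive Atom2 (U B : Type) : Type
  | ua : U → Var → Atom2 U B
  | ba : B → Var → Var → Atom2 U B

def vval {D : Type} (a a' : D) : Var → D
  | .x => a
  | .y => a'

def Atom2.inSig {U B : Type} (SU : Set U) (SB : Set B) : Atom2 U B → Prop
  | .ua P _ => P ∈ SU
  | .ba R _ _ => R ∈ SB

def Atom2.holds {U B : Type} (A : Str U B) (a a' : A.Dom) : Atom2 U B → Prop
  | .ua P v => A.u P (vval a a' v)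
  | .ba R v w => A.b R (vval a a' v) (vval a a' w)

def Atom2.onlyX {U B : Type} : Atom2 U B → Prop
  | .ua _ v => v = Var.x
  | .ba _ v w => v = Var.x ∧ w = Var.x

/-- the atomic 1-type of `a` for the signature `(SU, SB)` (the set of
Σ-atoms in the single variable x satisfied by `a`; this determines the set of
negated atoms as well) -/
def atp1 {U B : Type} (A : Str U B) (SU : Set U) (SB : Set B) (a : A.Dom) :
    Set (Atom2 U B) :=
  {α | α.onlyX ∧ α.inSig SU SB ∧ α.holds A a a}

/-- the atomic 2-type of `(a, a')` for the signature `(SU, SB)` (the set of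
Σ-atoms in x, y satisfied by `(a, a')`; together with `a ≠ a'` this determines
the atomic 2-type) -/
def atp2 {U B : Type} (A : Str U B) (SU : Set U) (SB : Set B) (a a' : A.Dom) :
    Set (Atom2 U B) :=
  {α | α.inSig SU SB ∧ α.holds A a a'}

/-- the atomic 2-type of `(a, a')` is guarded (contains `R x y` or `R y x`
for some binary `R ∈ SB`) -/
def Guarded2 {U B : Type} (A : Str U B) (SB : Set B) (a a' : A.Dom) : Prop :=
  ∃ R ∈ SB, A.b R a a' ∨ A.b R a' a

/-- GF²(Σ)-bisimulation between structures `A` and `Bm` -/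
structure IsBisim {U B : Type} (A Bm : Str U B) (SU : Set U) (SB : Set B)
    (Z : A.Dom → Bm.Dom → Prop) : Prop where
  atom_eq : ∀ {a b}, Z a b → atp1 A SU SB a = atp1 Bm SU SB b
  forth : ∀ {a b}, Z a b → ∀ a', a' ≠ a → Guarded2 A SB a a' →
      ∃ b', b' ≠ b ∧ atp2 A SU SB a a' = atp2 Bm SU SB b b' ∧ Z a' b'
  back : ∀ {a b}, Z a b → ∀ b', b' ≠ b → Guarded2 Bm SB b b' →
      ∃ a', a' ≠ a ∧ atp2 A SU SB a a' = atp2 Bm SU SB b b' ∧ Z a' b'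

/-- `(A, a) ∼_Σ (Bm, b)` -/
def Bisim {U B : Type} (A Bm : Str U B) (SU : Set U) (SB : Set B)
    (a : A.Dom) (b : Bm.Dom) : Prop :=
  ∃ Z, IsBisim A Bm SU SB Z ∧ Z a b

/-- `(A, a) ∼ᵏ_Σ (Bm, b)` : k-GF²(Σ)-bisimilarity -/
def KBisim {U B : Type} (A Bm : Str U B) (SU : Set U) (SB : Set B) :
    ℕ → A.Dom → Bm.Dom → Prop
  | 0, a, b => atp1 A SU SB a = atp1 Bm SU SB b
  | k+1, a, b => atp1 A SU SB a = atp1 Bm SU SB b ∧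
      (∀ a', a' ≠ a → Guarded2 A SB a a' →
        ∃ b', b' ≠ b ∧ atp2 A SU SB a a' = atp2 Bm SU SB b b' ∧
          KBisim A Bm SU SB k a' b') ∧
      (∀ b', b' ≠ b → Guarded2 Bm SB b b' →
        ∃ a', a' ≠ a ∧ atp2 A SU SB a a' = atp2 Bm SU SB b b' ∧
          KBisim A Bm SU SB k a' b')

/-- a (full-signature) atomic 2-type, given as its set of positive atoms,
is guarded -/
def Guarded2Type {U B : Type} (τ : Set (Atom2 U B)) : Prop :=
  ∃ R : B, Atom2.ba R Var.x Var.y ∈ τ ∨ Atom2.ba R Var.y Var.x ∈ τ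

/-- successor-saturated structures -/
def SuccSaturated {U B : Type} (A : Str U B) : Prop :=
  ∀ (a : A.Dom) (τ : Set (Atom2 U B)) (Γ : Set (Fml U B)),
    Guarded2Type τ →
    (∀ ψ ∈ Γ, IsOpenGF2 ψ ∧ ψ.free = {Var.x}) →
    (∀ Γ' : Finset (Fml U B), ↑Γ' ⊆ Γ →
      ∃ a', a' ≠ a ∧ atp2 A Set.univ Set.univ a a' = τ ∧
        ∀ ψ ∈ Γ', Sat A ψ (fun _ => a')) →
    ∃ b', b' ≠ a ∧ atp2 A Set.univ Set.univ a b' = τ ∧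
      ∀ ψ ∈ Γ, Sat A ψ (fun _ => b')

/-- finite outdegree: every element stands in a guarded atomic 2-type (for the
full signature) to only finitely many elements -/
def FiniteOutdeg {U B : Type} (A : Str U B) : Prop :=
  ∀ a : A.Dom, {a' | a' ≠ a ∧ ∃ R : B, A.b R a a' ∨ A.b R a' a}.Finite

/-- Σ-adjacency (edges of the Gaifman graph of the Σ-reduct) -/
def SigAdj {U B : Type} (A : Str U B) (SB : Set B) (a a' : A.Dom) : Prop :=
  a ≠ a' ∧ ∃ R ∈ SB, A.b R a a' ∨ A.b R a' a

/-- A forest structure: a structure whose Gaifman graph is a forest, directed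
by choosing a root for each tree; `parent p c` says that `p` is the
predecessor (parent) of `c`. -/
structure Forest (U B : Type) extends Str U B where
  parent : Dom → Dom → Prop
  parent_unique : ∀ {c p p' : Dom}, parent p c → parent p' c → p = p'
  parent_wf : WellFounded parent
  adj_iff : ∀ a a' : Dom,
    (a ≠ a' ∧ ∃ R : B, b R a a' ∨ b R a' a) ↔ (parent a a' ∨ parent a' a)

namespace Forest

variable {U B : Type}

/-- `a` together with its descendants -/
def desc (F : Forest U B) (a : F.Dom) : Set F.Dom :=
  {c | Relation.ReflTransGen F.parent a c}

/-- the subtrees rooted at `a` and at `a'` are isomorphic -/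
def SubtreeIso (F : Forest U B) (a a' : F.Dom) : Prop :=
  ∃ f : (F.desc a) ≃ (F.desc a'),
    (f ⟨a, Relation.ReflTransGen.refl⟩).val = a' ∧
    (∀ c d : F.desc a, F.parent c.val d.val ↔ F.parent (f c).val (f d).val) ∧
    (∀ (P : U) (c : F.desc a), F.u P c.val ↔ F.u P (f c).val) ∧
    (∀ (R : B) (c d : F.desc a), F.b R c.val d.val ↔ F.b R (f c).val (f d).val)

/-- regular: only finitely many subtrees up to isomorphism -/
def Regular (F : Forest U B) : Prop :=
  ∃ S : Set F.Dom, S.Finite ∧ ∀ a, ∃ a' ∈ S, F.SubtreeIso a' a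

/-- `a ≺ a'` : `a` and `a'` lie in the same Σ-tree and `a` is a proper
ancestor of `a'` -/
def prec (F : Forest U B) (SB : Set B) (a a' : F.Dom) : Prop :=
  Relation.ReflTransGen (SigAdj F.toStr SB) a a' ∧ Relation.TransGen F.parent a a'

end Forest

/-- `a_⊥`-delimited GF²(Σ)-bisimulation: like a GF²(Σ)-bisimulation except that
the back-and-forth conditions are not required at pairs whose first component
is `abot` -/
structure IsPtDelimBisim {U B : Type} (A Bm : Str U B) (SU : Set U) (SB : Set B)
    (abot : A.Dom) (Z : A.Dom → Bm.Dom → Prop) : Prop where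
  atom_eq : ∀ {a b}, Z a b → atp1 A SU SB a = atp1 Bm SU SB b
  forth : ∀ {a b}, Z a b → a ≠ abot → ∀ a', a' ≠ a → Guarded2 A SB a a' →
      ∃ b', b' ≠ b ∧ atp2 A SU SB a a' = atp2 Bm SU SB b b' ∧ Z a' b'
  back : ∀ {a b}, Z a b → a ≠ abot → ∀ b', b' ≠ b → Guarded2 Bm SB b b' →
      ∃ a', a' ≠ a ∧ atp2 A SU SB a a' = atp2 Bm SU SB b b' ∧ Z a' b'

/-- `(A, a) ∼^{a_⊥}_Σ (Bm, b)` -/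
def PtDelimBisim {U B : Type} (A Bm : Str U B) (SU : Set U) (SB : Set B)
    (abot : A.Dom) (a : A.Dom) (b : Bm.Dom) : Prop :=
  ∃ Z, IsPtDelimBisim A Bm SU SB abot Z ∧ Z a b

/-- `A_⊥`-delimited GF²(Σ)-bisimulation between a forest structure `F` and a
structure `Bm`, given by a pair of relations `Z0 (∼⁰)` and `Z1 (∼¹)`. -/
structure IsDelimBisim {U B : Type} (F : Forest U B) (Bm : Str U B)
    (SU : Set U) (SB : Set B) (Abot : Set F.Dom)
    (Z0 Z1 : F.Dom → Bm.Dom → Prop) : Prop where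
  zero : ∀ {a b}, Z0 a b →
    atp1 F.toStr SU SB a = atp1 Bm SU SB b ∧
    (∀ a', a' ≠ a → Guarded2 F.toStr SB a a' →
      ∃ b', b' ≠ b ∧
        ((F.parent a' a ∧ a' ∈ Abot) → Z1 a' b') ∧
        (¬ (F.parent a' a ∧ a' ∈ Abot) → Z0 a' b')) ∧
    (∀ b', b' ≠ b → Guarded2 Bm SB b b' →
      ∃ a', a' ≠ a ∧
        ((F.parent a' a ∧ a' ∈ Abot) → Z1 a' b') ∧
        (¬ (F.parent a' a ∧ a' ∈ Abot) → Z0 a' b'))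
  one : ∀ {a b}, Z1 a b → (∀ p, F.parent p a → p ∉ Abot) →
    atp1 F.toStr SU SB a = atp1 Bm SU SB b ∧
    (∀ a', a' ≠ a → Guarded2 F.toStr SB a a' →
      ∃ b', b' ≠ b ∧
        ((F.parent a a' ∧ a ∈ Abot) → Z0 a' b') ∧
        (¬ (F.parent a a' ∧ a ∈ Abot) → Z1 a' b')) ∧
    (∀ b', b' ≠ b → Guarded2 Bm SB b b' →
      ∃ a', a' ≠ a ∧
        ((F.parent a a' ∧ a ∈ Abot) → Z0 a' b') ∧
        (¬ (F.parent a a' ∧ a ∈ Abot) → Z1 a' b'))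

/-- `(F, a) ∼^{A_⊥}_Σ (Bm, b)` -/
def DelimBisim {U B : Type} (F : Forest U B) (Bm : Str U B)
    (SU : Set U) (SB : Set B) (Abot : Set F.Dom) (a : F.Dom) (b : Bm.Dom) : Prop :=
  ∃ Z0 Z1, IsDelimBisim F Bm SU SB Abot Z0 Z1 ∧ Z0 a b

/-- `cl φ` : the subformulas of `φ` closed under single negation and renaming
of free variables (among x, y) -/
def clSet {U B : Type} (φ : Fml U B) : Set (Fml U B) :=
  {χ | ∃ ψ ∈ φ.Subf, ∃ f : Var → Var,
      χ = ψ.renameFree f ∨ χ = .neg (ψ.renameFree f)}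

/-- a 1-type for `φ₂`: a set of formulas `ψ(x)` from `cl φ₂` such that
`φ₂ ∧ ∃x ⋀ t(x)` is satisfiable -/
def OneType {U B : Type} (φ₂ : Fml U B) (t : Set (Fml U B)) : Prop :=
  t ⊆ clSet φ₂ ∧ (∀ ψ ∈ t, ψ.free ⊆ {Var.x}) ∧
  ∃ (A : Str U B) (a : A.Dom), SatS A φ₂ ∧ ∀ ψ ∈ t, Sat A ψ (fun _ => a)

/-- `tp_Bm(b)` : the 1-type of `b` in `Bm` (w.r.t. `φ₂`) -/
def tpOf {U B : Type} (Bm : Str U B) (φ₂ : Fml U B) (b : Bm.Dom) :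
    Set (Fml U B) :=
  {ψ | ψ ∈ clSet φ₂ ∧ ψ.free ⊆ {Var.x} ∧ Sat Bm ψ (fun _ => b)}

end GFC

/-! Core: two-way alternating parity tree automata (2ATAs) on finitely
branching labeled trees. -/

namespace TA

/-- nodes: words over `ℕ ∖ {0}`; the successors of `w` are the `w ++ [i]` -/
abbrev Node : Type := List ℕ+

/-- a tree: a nonempty, prefix-closed, finitely branching set of nodes -/
def IsTree (T : Set Node) : Prop :=
  T.Nonempty ∧ (∀ w ∈ T, ∀ v : Node, v <+: w → v ∈ T) ∧
    ∀ w ∈ T, {i : ℕ+ | w ++ [i] ∈ T}.Finite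

/-- positive Boolean formulas over `α` -/
inductive PosBool (α : Type) : Type
  | tt
  | ff
  | var (a : α)
  | and (f g : PosBool α)
  | or (f g : PosBool α)

def PosBool.eval {α : Type} (v : α → Prop) : PosBool α → Prop
  | .tt => True
  | .ff => False
  | .var a => v a
  | .and f g => f.eval v ∧ g.eval v
  | .or f g => f.eval v ∨ g.eval v

/-- the transitions of a 2ATA: `q` (stay), `⟨−⟩q` (predecessor, required to
exist), `[−]q` (predecessor, if it exists), `◇q` (some successor),
`□q` (every successor) -/
inductive Move (Q : Type) : Type
  | here (q : Q)
  | up (q : Q)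
  | upOpt (q : Q)
  | dia (q : Q)
  | box (q : Q)

/-- a two-way alternating tree automaton (2ATA); the state set `Q` is assumed
finite where relevant -/
structure ATA (Q Θ : Type) where
  init : Q
  δ : Q → Θ → PosBool (Move Q)
  prio : Q → ℕ

/-- a run of the 2ATA `A` on the `Θ`-labeled tree `(T, Lab)`: a
`(T × Q)`-labeled tree `(Tr, r)` -/
structure IsRun {Q Θ : Type} (A : ATA Q Θ) (T : Set Node) (Lab : Node → Θ)
    (Tr : Set Node) (r : Node → Node × Q) : Prop where
  tree : IsTree Tr
  root : r [] = ([], A.init)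
  inT : ∀ y ∈ Tr, (r y).1 ∈ T
  step : ∀ y ∈ Tr, ∃ v : Move Q → Prop,
    (A.δ (r y).2 (Lab (r y).1)).eval v ∧
    (∀ p, v (.here p) →
      ∃ i : ℕ+, y ++ [i] ∈ Tr ∧ r (y ++ [i]) = ((r y).1, p)) ∧
    (∀ p, v (.up p) → (r y).1 ≠ [] ∧
      ∃ i : ℕ+, y ++ [i] ∈ Tr ∧ r (y ++ [i]) = ((r y).1.dropLast, p)) ∧
    (∀ p, v (.upOpt p) → (r y).1 = [] ∨
      ∃ i : ℕ+, y ++ [i] ∈ Tr ∧ r (y ++ [i]) = ((r y).1.dropLast, p)) ∧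
    (∀ p, v (.dia p) → ∃ j : ℕ+, (r y).1 ++ [j] ∈ T ∧
      ∃ i : ℕ+, y ++ [i] ∈ Tr ∧ r (y ++ [i]) = ((r y).1 ++ [j], p)) ∧
    (∀ p, v (.box p) → ∀ j : ℕ+, (r y).1 ++ [j] ∈ T →
      ∃ i : ℕ+, y ++ [i] ∈ Tr ∧ r (y ++ [i]) = ((r y).1 ++ [j], p))

/-- an infinite path through the run tree, starting at its root -/
def IsRunPath (Tr : Set Node) (π : ℕ → Node) : Prop :=
  π 0 = [] ∧ ∀ n, π (n + 1) ∈ Tr ∧ ∃ i : ℕ+, π (n + 1) = π n ++ [i]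

/-- the parity condition: the largest priority occurring infinitely often
along the sequence of states is even -/
def ParityAcc {Q : Type} (prio : Q → ℕ) (qs : ℕ → Q) : Prop :=
  ∃ m : ℕ, Even m ∧ {j | prio (qs j) = m}.Infinite ∧
    ∀ m', m < m' → {j | prio (qs j) = m'}.Finite

/-- the 2ATA `A` accepts the `Θ`-labeled tree `(T, Lab)` -/
def Accepts {Q Θ : Type} (A : ATA Q Θ) (T : Set Node) (Lab : Node → Θ) : Prop :=
  ∃ (Tr : Set Node) (r : Node → Node × Q), IsRun A T Lab Tr r ∧
    ∀ π : ℕ → Node, IsRunPath Tr π → ParityAcc A.prio (fun n => (r (π n)).2)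

/-- `(T, Lab) ∈ L(A)` -/
def InLang {Q Θ : Type} (A : ATA Q Θ) (T : Set Node) (Lab : Node → Θ) : Prop :=
  IsTree T ∧ Accepts A T Lab

/-- `w·i` for `i ∈ ℤ` : `w·0 = w`, `w·(−1)` is the predecessor of `w`
(undefined at the root), `w·i = w ++ [i]` for `i ≥ 1` -/
def moveZ (x : Node) (i : ℤ) : Option Node :=
  if i = 0 then some x
  else if i = -1 then (if x = [] then none else some x.dropLast)
  else if h : 0 < i then some (x ++ [⟨i.toNat, by omega⟩]) else none

end TA

namespace GFC

open TA

/-- the alphabet `Θ`: pairs `(τ, M)` with `τ` an atomic 2-type for the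
signature `(SU, SB)` (represented by its set of positive atoms, all of which
must use predicates from the signature; together with `¬(x=y)` this determines
a maximal satisfiable set of literals) and `M ∈ {0,1}` -/
def TypeAlph (U B : Type) (SU : Set U) (SB : Set B) : Type :=
  {τ : Set (Atom2 U B) // ∀ α ∈ τ, α.inSig SU SB} × Bool

/-- the structure `𝔄_{(T,L)}` represented by a `Θ`-labeled tree `(T, L)`:
the universe is `T`; `w` satisfies a unary `A` iff `Ay ∈ L(w)¹`; `(w,w') ∈ R`
iff (1) `w = w'` and `Ryy ∈ L(w)¹`, or (2) `w'` is a successor of `w` and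
`Rxy ∈ L(w')¹`, or (3) `w` is a successor of `w'` and `Ryx ∈ L(w)¹`. -/
def mkStr {U B : Type} (SU : Set U) (SB : Set B) (T : Set TA.Node)
    (hT : TA.IsTree T) (Lab : TA.Node → TypeAlph U B SU SB) : Str U B where
  Dom := {w : TA.Node // w ∈ T}
  nonempty := by
    obtain ⟨w, hw⟩ := hT.1
    exact ⟨⟨w, hw⟩⟩
  u := fun P w => Atom2.ua P Var.y ∈ (Lab w.val).1.val
  b := fun R w w' =>
    (w = w' ∧ Atom2.ba R Var.y Var.y ∈ (Lab w.val).1.val) ∨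
    ((∃ i : ℕ+, w'.val = w.val ++ [i]) ∧
        Atom2.ba R Var.x Var.y ∈ (Lab w'.val).1.val) ∨
    ((∃ i : ℕ+, w.val = w'.val ++ [i]) ∧
        Atom2.ba R Var.y Var.x ∈ (Lab w.val).1.val)

end GFC

/-!
A guard forces the values of its variables to coincide or to be adjacent in the tree. The truth of a
GF² formula under a guarded assignment is therefore expressed, at the lower of the two values, by a
two-way modal formula; a quantifier over the only free variable of its scope becomes a global
modality (`somewhere` or `everywhere` in the tree).

A modal formula is checked by an automaton whose states are its subformulas and in which a global
modality walks along the edges. Only `somewhere` has the odd priority 1. If the formula is true,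
then always stepping towards the nearest witness makes the pair (size of the formula, distance to
the witness) a progress measure, so the run is accepting. Conversely, in an accepting run every
visit to `somewhere` leads to a last one, which must move on to a true witness, while a visit to
`everywhere` spreads to all nodes.
-/

namespace TA

/-! ### Trees -/

section Trees

variable {T : Set Node}

theorem IsTree.nil_mem (hT : IsTree T) : [] ∈ T := by
  obtain ⟨w, hw⟩ := hT.1
  exact hT.2.1 w hw [] w.nil_prefix

theorem IsTree.dropLast_mem (hT : IsTree T) {w : Node} (hw : w ∈ T) : w.dropLast ∈ T :=
  hT.2.1 w hw _ w.dropLast_prefix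

theorem IsTree.of_concat_mem (hT : IsTree T) {w : Node} {i : ℕ+} (hw : w ++ [i] ∈ T) : w ∈ T :=
  hT.2.1 _ hw w (w.prefix_append [i])

theorem IsTree.forall_of_edge_iff (hT : IsTree T) {P : Node → Prop}
    (hP : ∀ w i, w ++ [i] ∈ T → (P (w ++ [i]) ↔ P w)) {v : Node} (hv : v ∈ T) (hPv : P v) :
    ∀ w ∈ T, P w := by
  have iff_root (w : Node) (hw : w ∈ T) : P w ↔ P [] := by
    induction w using List.reverseRecOn with
    | nil => rfl
    | append_singleton w i ih => exact (hP w i hw).trans (ih (hT.of_concat_mem hw))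
  exact fun w hw => (iff_root w hw).2 ((iff_root v hv).1 hPv)

/-- The nodes that a single move of a two-way automaton can reach from `w`: `w` itself, its
predecessor and its successors in `T`. The root counts as its own predecessor, since
`[].dropLast = []`. -/
def neighborhood (T : Set Node) (w : Node) : Set Node :=
  {w, w.dropLast} ∪ {w' ∈ T | ∃ i, w' = w ++ [i]}

theorem IsTree.finite_neighborhood (hT : IsTree T) {w : Node} (hw : w ∈ T) :
    (neighborhood T w).Finite := by
  refine (Set.toFinite _).union (((hT.2.2 w hw).image fun i => w ++ [i]).subset ?_)
  rintro _ ⟨hi, i, rfl⟩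
  exact ⟨i, hi, rfl⟩

theorem IsTree.neighborhood_subset (hT : IsTree T) {w : Node} (hw : w ∈ T) :
    neighborhood T w ⊆ T := by
  rintro _ ((rfl | rfl) | ⟨hi, -⟩)
  exacts [hw, hT.dropLast_mem hw, hi]

theorem IsTree.exists_iff_of_forall_mem_neighborhood (hT : IsTree T) {P : {w // w ∈ T} → Prop}
    {e : {w // w ∈ T}} (hP : ∀ d, P d → d.1 ∈ neighborhood T e.1) :
    (∃ d, P d) ↔ P e ∨ (∃ i, ∃ hi : e.1 ++ [i] ∈ T, P ⟨e.1 ++ [i], hi⟩) ∨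
      (e.1 ≠ [] ∧ P ⟨e.1.dropLast, hT.dropLast_mem e.2⟩) := by
  constructor
  · rintro ⟨⟨w, hw⟩, h⟩
    obtain (rfl | rfl) | ⟨-, i, rfl⟩ := hP _ h
    · exact .inl h
    · by_cases he : e.1 = []
      · have heq : (⟨e.1.dropLast, hw⟩ : {w // w ∈ T}) = e := Subtype.ext (by simp [he])
        exact .inl (heq ▸ h)
      · exact .inr (.inr ⟨he, h⟩)
    · exact .inr (.inl ⟨i, hw, h⟩)
  · rintro (h | ⟨i, hi, h⟩ | ⟨-, h⟩)
    exacts [⟨_, h⟩, ⟨_, h⟩, ⟨_, h⟩]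

/-- `ReachIn T P n w`: some walk of length `n` in `T` leads from `w` to a node satisfying `P`. -/
def ReachIn (T : Set Node) (P : Node → Prop) : ℕ → Node → Prop
  | 0, w => P w
  | n + 1, w => (w ≠ [] ∧ ReachIn T P n w.dropLast) ∨ ∃ i, w ++ [i] ∈ T ∧ ReachIn T P n (w ++ [i])

/-- The distance in `T` from `w` to the nearest node satisfying `P` (junk value `0` if there is
none). -/
noncomputable def distTo (T : Set Node) (P : Node → Prop) (w : Node) : ℕ :=
  sInf {n | ReachIn T P n w}

theorem IsTree.exists_reachIn (hT : IsTree T) {P : Node → Prop} {v : Node} (hv : v ∈ T)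
    (hPv : P v) : ∀ w ∈ T, ∃ n, ReachIn T P n w := by
  refine hT.forall_of_edge_iff (fun w i hwi => ⟨?_, ?_⟩) hv ⟨0, hPv⟩
  · exact fun ⟨n, hn⟩ => ⟨n + 1, .inr ⟨i, hwi, hn⟩⟩
  · exact fun ⟨n, hn⟩ => ⟨n + 1, .inl ⟨by simp, by simpa using hn⟩⟩

theorem distTo_lt_of_reachIn_distTo {P : Node → Prop} {w w' : Node} {n : ℕ}
    (hn : distTo T P w = n + 1) (h : ReachIn T P n w') : distTo T P w' < distTo T P w := by
  have : distTo T P w' ≤ n := Nat.sInf_le h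
  omega

theorem IsTree.exists_distTo_lt (hT : IsTree T) {P : Node → Prop} {v w : Node} (hv : v ∈ T)
    (hPv : P v) (hw : w ∈ T) :
    P w ∨ (w ≠ [] ∧ distTo T P w.dropLast < distTo T P w) ∨
      ∃ i, w ++ [i] ∈ T ∧ distTo T P (w ++ [i]) < distTo T P w := by
  have h : ReachIn T P (distTo T P w) w := Nat.sInf_mem (hT.exists_reachIn hv hPv w hw)
  cases hd : distTo T P w with
  | zero => exact .inl (by simpa only [hd, ReachIn] using h)
  | succ n =>
    rw [hd] at h
    rw [← hd]
    obtain ⟨hne, h⟩ | ⟨i, hi, h⟩ := h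
    · exact .inr (.inl ⟨hne, distTo_lt_of_reachIn_distTo hd h⟩)
    · exact .inr (.inr ⟨i, hi, distTo_lt_of_reachIn_distTo hd h⟩)

end Trees

/-! ### Moves and runs -/

section Moves

variable {Q Q' : Type} {T : Set Node}

/-- Replace the target state of a move. -/
def Move.map (f : Q → Q') : Move Q → Move Q'
  | .here q => .here (f q)
  | .up q => .up (f q)
  | .upOpt q => .upOpt (f q)
  | .dia q => .dia (f q)
  | .box q => .box (f q)

/-- The De Morgan dual of a move. -/
def Move.dual : Move Q → Move Q
  | .here q => .here q
  | .up q => .upOpt q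
  | .upOpt q => .up q
  | .dia q => .box q
  | .box q => .dia q

/-- The meaning of a move at `w`, where `S w' q` says that state `q` may be sent to `w'`. -/
def Move.Holds (T : Set Node) (S : Node → Q → Prop) (w : Node) : Move Q → Prop
  | .here q => S w q
  | .up q => w ≠ [] ∧ S w.dropLast q
  | .upOpt q => w = [] ∨ S w.dropLast q
  | .dia q => ∃ i, w ++ [i] ∈ T ∧ S (w ++ [i]) q
  | .box q => ∀ i, w ++ [i] ∈ T → S (w ++ [i]) q

theorem Move.holds_map (f : Q → Q') {S : Node → Q' → Prop} {w : Node} (m : Move Q) :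
    (m.map f).Holds T S w ↔ m.Holds T (fun w' q => S w' (f q)) w := by
  cases m <;> rfl

theorem Move.holds_dual {S : Node → Q → Prop} {w : Node} (m : Move Q) :
    m.dual.Holds T (fun w' q => ¬ S w' q) w ↔ ¬ m.Holds T S w := by
  cases m <;> simp [Move.dual, Move.Holds, imp_iff_not_or]

theorem Move.Holds.mono {S S' : Node → Q → Prop} {w : Node} {m : Move Q} (hm : m.Holds T S w)
    (h : ∀ w' ∈ neighborhood T w, ∀ q, S w' q → S' w' q) : m.Holds T S' w := by
  have self_mem : w ∈ neighborhood T w := .inl (.inl rfl)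
  have pred_mem : w.dropLast ∈ neighborhood T w := .inl (.inr rfl)
  have succ_mem (i : ℕ+) (hi : w ++ [i] ∈ T) : w ++ [i] ∈ neighborhood T w := .inr ⟨hi, i, rfl⟩
  cases m with
  | here q => exact h _ self_mem q hm
  | up q => exact ⟨hm.1, h _ pred_mem q hm.2⟩
  | upOpt q => exact hm.imp_right (h _ pred_mem q)
  | dia q => exact hm.imp fun i hi => ⟨hi.1, h _ (succ_mem i hi.1) q hi.2⟩
  | box q => exact fun i hi => h _ (succ_mem i hi) q (hm i hi)

theorem PosBool.eval_mono {α : Type} {v v' : α → Prop} (h : ∀ a, v a → v' a) :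
    ∀ {f : PosBool α}, f.eval v → f.eval v'
  | .tt => id
  | .ff => id
  | .var a => h a
  | .and _ _ => And.imp (eval_mono h) (eval_mono h)
  | .or _ _ => Or.imp (eval_mono h) (eval_mono h)

end Moves

section Runs

variable {Q Θ : Type} {A : ATA Q Θ} {T Tr : Set Node} {Lab : Node → Θ} {r : Node → Node × Q}

/-- Some child of `y` in the run tree `(Tr, r)` is labelled with node `w` and state `q`. -/
def RunChild (Tr : Set Node) (r : Node → Node × Q) (y w : Node) (q : Q) : Prop :=
  ∃ i, y ++ [i] ∈ Tr ∧ r (y ++ [i]) = (w, q)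

theorem IsRun.eval_holds (hrun : IsRun A T Lab Tr r) {y : Node} (hy : y ∈ Tr) :
    (A.δ (r y).2 (Lab (r y).1)).eval (Move.Holds T (RunChild Tr r y) (r y).1) := by
  obtain ⟨v, hv, here, up, upOpt, dia, box⟩ := hrun.step y hy
  refine PosBool.eval_mono (fun m hm => ?_) hv
  cases m with
  | here q => exact here q hm
  | up q => exact up q hm
  | upOpt q => exact upOpt q hm
  | dia q => exact dia q hm
  | box q => exact box q hm

theorem parityAcc_iff_even {prio : Q → ℕ} {qs : ℕ → Q} {m : ℕ}
    (h : ∀ᶠ j in Filter.atTop, prio (qs j) = m) : ParityAcc prio qs ↔ Even m := by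
  have eq_of_infinite {m' : ℕ} (hm' : {j | prio (qs j) = m'}.Infinite) : m' = m := by
    obtain ⟨j, hj', hj⟩ := ((Nat.frequently_atTop_iff_infinite.2 hm').and_eventually h).exists
    exact hj'.symm.trans hj
  constructor
  · rintro ⟨m', heven, hinf, -⟩
    exact eq_of_infinite hinf ▸ heven
  · exact fun heven => ⟨m, heven, Nat.frequently_atTop_iff_infinite.1 h.frequently,
      fun m' hlt => Set.not_infinite.1 fun hinf => hlt.ne' (eq_of_infinite hinf)⟩

theorem exists_isRunPath_of_chain (hTr : IsTree Tr) {f : ℕ → Node} (hf : ∀ n, f n ∈ Tr)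
    (hstep : ∀ n, ∃ i, f (n + 1) = f n ++ [i]) :
    ∃ π, IsRunPath Tr π ∧ ∀ n, π (n + (f 0).length) = f n := by
  have hlen (n : ℕ) : (f n).length = n + (f 0).length := by
    induction n with
    | zero => simp
    | succ n ih =>
      obtain ⟨i, hi⟩ := hstep n
      simp only [hi, List.length_append, ih, List.length_singleton]
      omega
  have hprefix (n k : ℕ) : f n <+: f (n + k) := by
    induction k with
    | zero => exact List.prefix_rfl
    | succ k ih =>
      obtain ⟨i, hi⟩ := hstep (n + k)
      exact ih.trans (hi ▸ List.prefix_append _ _)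
  refine ⟨fun n => (f n).take n, ⟨rfl, fun n => ⟨hTr.2.1 _ (hf _) _ (List.take_prefix _ _), ?_⟩⟩,
    fun n => ?_⟩
  · obtain ⟨i, hi⟩ := hstep n
    have hn : n < (f (n + 1)).length := by have := hlen (n + 1); omega
    refine ⟨(f (n + 1))[n], ?_⟩
    have htake : (f n).take n = (f (n + 1)).take n := by
      rw [hi, List.take_append_of_le_length (by have := hlen n; omega)]
    exact (htake ▸ List.take_append_getElem hn).symm
  · simpa only [hlen n] using (List.prefix_iff_eq_take.1 (hprefix n (f 0).length)).symm

/-- The run tree `(Tr, r)` visits node `w` in state `q`. -/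
def Visited (Tr : Set Node) (r : Node → Node × Q) (w : Node) (q : Q) : Prop :=
  ∃ y ∈ Tr, r y = (w, q)

theorem RunChild.visited {y w : Node} {q : Q} : RunChild Tr r y w q → Visited Tr r w q :=
  fun ⟨_, hi, hr⟩ => ⟨_, hi, hr⟩

theorem IsRun.mem_of_visited (hrun : IsRun A T Lab Tr r) {w : Node} {q : Q}
    (hvis : Visited Tr r w q) : w ∈ T := by
  obtain ⟨y, hy, hr⟩ := hvis
  simpa only [hr] using hrun.inT y hy

theorem IsRun.eval_visited (hrun : IsRun A T Lab Tr r) {w : Node} {q : Q}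
    (hvis : Visited Tr r w q) : (A.δ q (Lab w)).eval (Move.Holds T (Visited Tr r) w) := by
  obtain ⟨y, hy, hr⟩ := hvis
  have hδ := hrun.eval_holds hy
  simp only [hr] at hδ
  exact PosBool.eval_mono (fun m hm => hm.mono fun _ _ _ => RunChild.visited) hδ

theorem IsRun.exists_last_visit (hrun : IsRun A T Lab Tr r)
    (hacc : ∀ π, IsRunPath Tr π → ParityAcc A.prio fun n => (r (π n)).2)
    {q : Q} (hq : ¬ Even (A.prio q)) {w : Node} (hvis : Visited Tr r w q) :
    ∃ y ∈ Tr, (r y).2 = q ∧ ∀ w', ¬ RunChild Tr r y w' q := by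
  obtain ⟨y, hy, hr⟩ := hvis
  by_contra! hne
  have hchild (z : {z // z ∈ Tr ∧ (r z).2 = q}) :
      ∃ z' : {z // z ∈ Tr ∧ (r z).2 = q}, ∃ i, z'.1 = z.1 ++ [i] := by
    obtain ⟨w, i, hi, hr⟩ := hne z.1 z.2.1 z.2.2
    exact ⟨⟨_, hi, by rw [hr]⟩, i, rfl⟩
  choose next hnext using hchild
  let f (n : ℕ) : {z // z ∈ Tr ∧ (r z).2 = q} := next^[n] ⟨y, hy, by rw [hr]⟩
  obtain ⟨π, hπ, hπf⟩ := exists_isRunPath_of_chain hrun.tree (f := fun n => (f n).1)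
    (fun n => (f n).2.1) fun n => by
      simpa only [f, Function.iterate_succ_apply'] using hnext (f n)
  refine hq ((parityAcc_iff_even ?_).1 (hacc π hπ))
  filter_upwards [Filter.eventually_ge_atTop (f 0).1.length] with j hj
  obtain ⟨n, rfl⟩ := Nat.exists_eq_add_of_le' hj
  rw [hπf, (f n).2.2]

theorem IsRun.exists_eval_visited_ne (hrun : IsRun A T Lab Tr r)
    (hacc : ∀ π, IsRunPath Tr π → ParityAcc A.prio fun n => (r (π n)).2)
    {q : Q} (hq : ¬ Even (A.prio q)) {w : Node} (hvis : Visited Tr r w q) :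
    ∃ w' ∈ T, (A.δ q (Lab w')).eval
      (Move.Holds T (fun v p => Visited Tr r v p ∧ p ≠ q) w') := by
  obtain ⟨y, hy, hyq, hlast⟩ := hrun.exists_last_visit hacc hq hvis
  refine ⟨(r y).1, hrun.inT y hy, PosBool.eval_mono (fun m hm => hm.mono fun v _ p hchild => ?_)
    (hyq ▸ hrun.eval_holds hy)⟩
  exact ⟨hchild.visited, fun hp => hlast v (hp ▸ hchild)⟩

end Runs

/-! ### Building accepting runs -/

section Follow

variable {α : Type*} {succ : α → List α} {start a : α} {y : Node}

/-- The node reached by following the path `y` from `start` in the forest whose children are listed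
by `succ`; `none` if there is no such path. Path entries count from `1`. -/
def follow {α : Type*} (succ : α → List α) (start : α) (y : Node) : Option α :=
  y.foldlM (fun a i => (succ a)[i.natPred]?) start

theorem follow_append (succ : α → List α) (start : α) (y z : Node) :
    follow succ start (y ++ z) = (follow succ start y).bind fun a => follow succ a z :=
  List.foldlM_append

theorem follow_concat (hy : follow succ start y = some a) (i : ℕ+) :
    follow succ start (y ++ [i]) = (succ a)[i.natPred]? := by
  rw [follow_append, hy]
  simp [follow]

theorem mem_succ_iff_exists_follow_concat (hy : follow succ start y = some a) {a' : α} :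
    a' ∈ succ a ↔ ∃ i, follow succ start (y ++ [i]) = some a' := by
  simp only [follow_concat hy, List.mem_iff_getElem?]
  exact ⟨fun ⟨n, hn⟩ => ⟨n.succPNat, by simpa using hn⟩, fun ⟨i, hi⟩ => ⟨_, hi⟩⟩

theorem isTree_isSome_follow (succ : α → List α) (start : α) :
    IsTree {y | (follow succ start y).isSome} := by
  refine ⟨⟨[], rfl⟩, ?_, fun y hy => ?_⟩
  · rintro _ hy v ⟨u, rfl⟩
    rw [Set.mem_ofPred_eq, follow_append] at hy
    exact Option.isSome_of_isSome_bind hy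
  · obtain ⟨a, ha⟩ := Option.isSome_iff_exists.1 hy
    refine ((Set.finite_Iio (succ a).length).preimage PNat.natPred_injective.injOn).subset ?_
    intro i hi
    simpa [follow_concat ha] using hi

theorem follow_mem {W : Set α} (hstart : start ∈ W)
    (hsucc : ∀ a ∈ W, ∀ a' ∈ succ a, a' ∈ W) (hy : follow succ start y = some a) : a ∈ W := by
  induction y using List.reverseRecOn generalizing a with
  | nil => exact Option.some.inj hy ▸ hstart
  | append_singleton y i ih =>
    obtain ⟨b, hb, -⟩ := Option.bind_eq_some_iff.1 (follow_append succ start y [i] ▸ hy)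
    exact hsucc b (ih hb) a ((mem_succ_iff_exists_follow_concat hb).2 ⟨i, hy⟩)

end Follow

section Strategies

variable {Q Θ : Type} {A : ATA Q Θ} {T : Set Node} {Lab : Node → Θ}

theorem accepts_of_successors {W : Set (Node × Q)} {succ : Node × Q → List (Node × Q)}
    (hinit : ([], A.init) ∈ W) (hWT : ∀ p ∈ W, p.1 ∈ T) (hsucc : ∀ p ∈ W, ∀ p' ∈ succ p, p' ∈ W)
    (hstep : ∀ p ∈ W, (A.δ p.2 (Lab p.1)).eval (Move.Holds T (fun w q => (w, q) ∈ succ p) p.1))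
    (hacc : ∀ f : ℕ → Node × Q, (∀ n, f n ∈ W) → (∀ n, f (n + 1) ∈ succ (f n)) →
      ParityAcc A.prio fun n => (f n).2) :
    Accepts A T Lab := by
  let start : Node × Q := ([], A.init)
  let Tr : Set Node := {y | (follow succ start y).isSome}
  let r (y : Node) : Node × Q := (follow succ start y).getD start
  have hTr : IsTree Tr := isTree_isSome_follow succ start
  have follow_eq {y : Node} (hy : y ∈ Tr) : follow succ start y = some (r y) := by
    obtain ⟨p, hp⟩ := Option.isSome_iff_exists.1 hy
    simp [r, hp]
  have hW {y : Node} (hy : y ∈ Tr) : r y ∈ W := follow_mem hinit hsucc (follow_eq hy)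
  have runChild {y : Node} (hy : y ∈ Tr) {w : Node} {q : Q} (h : (w, q) ∈ succ (r y)) :
      RunChild Tr r y w q := by
    obtain ⟨i, hi⟩ := (mem_succ_iff_exists_follow_concat (follow_eq hy)).1 h
    exact ⟨i, by simp [Tr, hi], by simp [r, hi]⟩
  refine ⟨Tr, r, ⟨hTr, rfl, fun y hy => hWT _ (hW hy), fun y hy => ?_⟩, fun π hπ => ?_⟩
  · exact ⟨_, PosBool.eval_mono (fun m hm => hm.mono fun _ _ _ => runChild hy) (hstep _ (hW hy)),
      fun _ h => h, fun _ h => h, fun _ h => h, fun _ h => h, fun _ h => h⟩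
  · have hmem (n : ℕ) : π n ∈ Tr := by
      cases n with
      | zero => exact hπ.1 ▸ hTr.nil_mem
      | succ n => exact (hπ.2 n).1
    refine hacc (fun n => r (π n)) (fun n => hW (hmem n)) fun n => ?_
    obtain ⟨i, hi⟩ := (hπ.2 n).2
    exact (mem_succ_iff_exists_follow_concat (follow_eq (hmem n))).2
      ⟨i, hi ▸ follow_eq (hmem (n + 1))⟩

theorem accepts_of_strategy [Finite Q] (hT : IsTree T) {W : Set (Node × Q)}
    {R : Node × Q → Node × Q → Prop} (hinit : ([], A.init) ∈ W) (hWT : ∀ p ∈ W, p.1 ∈ T)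
    (hstep : ∀ p ∈ W, (A.δ p.2 (Lab p.1)).eval
      (Move.Holds T (fun w q => (w, q) ∈ W ∧ R p (w, q)) p.1))
    (hacc : ∀ f : ℕ → Node × Q, (∀ n, R (f n) (f (n + 1))) → ParityAcc A.prio fun n => (f n).2) :
    Accepts A T Lab := by
  have hlist (p : Node × Q) : ∃ l : List (Node × Q), p ∈ W →
      ∀ p', p' ∈ l ↔ p'.1 ∈ neighborhood T p.1 ∧ p' ∈ W ∧ R p p' := by
    by_cases hp : p ∈ W
    · have hfin : {p' : Node × Q | p'.1 ∈ neighborhood T p.1 ∧ p' ∈ W ∧ R p p'}.Finite :=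
        ((hT.finite_neighborhood (hWT p hp)).prod Set.finite_univ).subset
          fun p' h => ⟨h.1, Set.mem_univ _⟩
      exact ⟨hfin.toFinset.toList, by simp⟩
    · exact ⟨[], fun h => absurd h hp⟩
  choose succ hsucc using hlist
  refine accepts_of_successors (succ := succ) hinit hWT
    (fun p hp p' h => ((hsucc p hp p').1 h).2.1) (fun p hp => ?_)
    fun f hf hchain => hacc f fun n => ((hsucc _ (hf n) _).1 (hchain n)).2.2
  exact PosBool.eval_mono
    (fun m hm => hm.mono fun w' hw' q h => (hsucc p hp (w', q)).2 ⟨hw', h⟩) (hstep p hp)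

theorem eventually_eq_zero_of_lt_or_le {α : Type*} [PartialOrder α] [WellFoundedLT α] {c : ℕ → ℕ}
    {μ : ℕ → α} (h : ∀ n, μ (n + 1) < μ n ∨ c n = 0 ∧ μ (n + 1) ≤ μ n) :
    ∀ᶠ n in Filter.atTop, c n = 0 := by
  have hanti : Antitone μ := antitone_nat_of_succ_le fun n => (h n).elim le_of_lt And.right
  obtain ⟨N, hN⟩ := WellFoundedLT.antitone_chain_condition hanti
  filter_upwards [Filter.eventually_ge_atTop N] with n hn
  refine ((h n).resolve_left fun hlt => hlt.ne ?_).1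
  rw [← hN n hn, ← hN (n + 1) (hn.trans n.le_succ)]

theorem accepts_of_progressMeasure [Finite Q] {α : Type*} [PartialOrder α] [WellFoundedLT α]
    (hT : IsTree T) {S : Node → Q → Prop} (μ : Node → Q → α) (hinit : S [] A.init)
    (hstep : ∀ w ∈ T, ∀ q, S w q → (A.δ q (Lab w)).eval (Move.Holds T (fun w' q' =>
      S w' q' ∧ (μ w' q' < μ w q ∨ A.prio q = 0 ∧ μ w' q' ≤ μ w q)) w)) :
    Accepts A T Lab := by
  refine accepts_of_strategy hT (W := {p | p.1 ∈ T ∧ S p.1 p.2})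
    (R := fun p p' => μ p'.1 p'.2 < μ p.1 p.2 ∨ A.prio p.2 = 0 ∧ μ p'.1 p'.2 ≤ μ p.1 p.2)
    ⟨hT.nil_mem, hinit⟩ (fun _ hp => hp.1) (fun p hp => ?_) fun f hf => ?_
  · refine PosBool.eval_mono (fun m hm => hm.mono fun w' hw' q' h => ?_) (hstep p.1 hp.1 p.2 hp.2)
    exact ⟨⟨hT.neighborhood_subset hp.1 hw', h.1⟩, h.2⟩
  · exact (parityAcc_iff_even (eventually_eq_zero_of_lt_or_le
      (μ := fun n => μ (f n).1 (f n).2) hf)).2 Even.zero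

end Strategies

/-! ### A two-way modal logic on labelled trees -/

/-- Formulas, in negation normal form, of a modal logic on `Θ`-labelled trees: letter predicates,
one modality for every kind of move of a 2ATA, and the two global modalities. -/
inductive TreeFml (Θ : Type) : Type
  | lit (p : Θ → Prop)
  | conj (φ ψ : TreeFml Θ)
  | disj (φ ψ : TreeFml Θ)
  | modal (m : Move Unit) (φ : TreeFml Θ)
  | somewhere (φ : TreeFml Θ)
  | everywhere (φ : TreeFml Θ)

namespace TreeFml

variable {Θ : Type} {T : Set Node} {Lab : Node → Θ}

/-- Truth of a formula at a node of the labelled tree `(T, Lab)`. -/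
def Sat (T : Set Node) (Lab : Node → Θ) : TreeFml Θ → Node → Prop
  | lit p, w => p (Lab w)
  | conj φ ψ, w => φ.Sat T Lab w ∧ ψ.Sat T Lab w
  | disj φ ψ, w => φ.Sat T Lab w ∨ ψ.Sat T Lab w
  | modal m φ, w => m.Holds T (fun w' _ => φ.Sat T Lab w') w
  | somewhere φ, _ => ∃ w ∈ T, φ.Sat T Lab w
  | everywhere φ, _ => ∀ w ∈ T, φ.Sat T Lab w

/-- The negation normal form of the negation of a formula. -/
def dual : TreeFml Θ → TreeFml Θ
  | lit p => lit fun θ => ¬ p θ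
  | conj φ ψ => disj φ.dual ψ.dual
  | disj φ ψ => conj φ.dual ψ.dual
  | modal m φ => modal m.dual φ.dual
  | somewhere φ => everywhere φ.dual
  | everywhere φ => somewhere φ.dual

theorem sat_dual (φ : TreeFml Θ) (w : Node) : φ.dual.Sat T Lab w ↔ ¬ φ.Sat T Lab w := by
  induction φ generalizing w with
  | lit p => rfl
  | conj φ ψ ihφ ihψ => simp only [dual, Sat, ihφ, ihψ, not_and_or]
  | disj φ ψ ihφ ihψ => simp only [dual, Sat, ihφ, ihψ, not_or]
  | modal m φ ih => simp only [dual, Sat, ih, Move.holds_dual]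
  | somewhere φ ih => simp only [dual, Sat, ih, not_exists, not_and]
  | everywhere φ ih => simp only [dual, Sat, ih, not_forall, exists_prop]

/-- The set of subformulas of a formula, including the formula itself. -/
def subfmls : TreeFml Θ → Set (TreeFml Θ)
  | lit p => {lit p}
  | conj φ ψ => insert (conj φ ψ) (φ.subfmls ∪ ψ.subfmls)
  | disj φ ψ => insert (disj φ ψ) (φ.subfmls ∪ ψ.subfmls)
  | modal m φ => insert (modal m φ) φ.subfmls
  | somewhere φ => insert (somewhere φ) φ.subfmls
  | everywhere φ => insert (everywhere φ) φ.subfmls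

theorem self_mem_subfmls (φ : TreeFml Θ) : φ ∈ φ.subfmls := by
  cases φ <;> simp [subfmls]

theorem finite_subfmls (φ : TreeFml Θ) : φ.subfmls.Finite := by
  induction φ with
  | lit p => exact Set.finite_singleton _
  | conj φ ψ ihφ ihψ => exact (ihφ.union ihψ).insert _
  | disj φ ψ ihφ ihψ => exact (ihφ.union ihψ).insert _
  | modal m φ ih => exact ih.insert _
  | somewhere φ ih => exact ih.insert _
  | everywhere φ ih => exact ih.insert _

/-- The states of the automaton for `φ`: the subformulas of `φ`, in the form in which the
immediate subformulas of a state are visibly states again. -/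
def State (φ : TreeFml Θ) : Type := {ψ : TreeFml Θ // ψ.subfmls ⊆ φ.subfmls}

instance (φ : TreeFml Θ) : Finite φ.State :=
  (φ.finite_subfmls.subset fun ψ (h : ψ.subfmls ⊆ φ.subfmls) => h ψ.self_mem_subfmls).to_subtype

open Classical in
/-- The transition function of the automaton for `φ`: Boolean connectives and move modalities are
unfolded, and a global modality propagates through the tree one edge at a time. -/
noncomputable def transition {φ : TreeFml Θ} : φ.State → Θ → PosBool (Move φ.State)
  | ⟨lit p, _⟩, θ => if p θ then .tt else .ff
  | ⟨conj a b, h⟩, _ =>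
    .and (.var (.here ⟨a, fun _ hc => h (.inr (.inl hc))⟩))
      (.var (.here ⟨b, fun _ hc => h (.inr (.inr hc))⟩))
  | ⟨disj a b, h⟩, _ =>
    .or (.var (.here ⟨a, fun _ hc => h (.inr (.inl hc))⟩))
      (.var (.here ⟨b, fun _ hc => h (.inr (.inr hc))⟩))
  | ⟨modal m a, h⟩, _ => .var (m.map fun _ => ⟨a, fun _ hc => h (.inr hc)⟩)
  | ⟨somewhere a, h⟩, _ =>
    .or (.var (.here ⟨a, fun _ hc => h (.inr hc)⟩))
      (.or (.var (.up ⟨somewhere a, h⟩)) (.var (.dia ⟨somewhere a, h⟩)))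
  | ⟨everywhere a, h⟩, _ =>
    .and (.var (.here ⟨a, fun _ hc => h (.inr hc)⟩))
      (.and (.var (.upOpt ⟨everywhere a, h⟩)) (.var (.box ⟨everywhere a, h⟩)))

/-- Priority `1` on `somewhere` forbids postponing its witness forever. -/
def priority : TreeFml Θ → ℕ
  | somewhere _ => 1
  | _ => 0

/-- The automaton that checks `φ` at the root. -/
noncomputable def toATA (φ : TreeFml Θ) : ATA φ.State Θ where
  init := ⟨φ, subset_rfl⟩
  δ := transition
  prio ψ := ψ.1.priority

section Completeness

/-- The distance to the nearest witness of a `somewhere` formula, and `0` for all others. -/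
noncomputable def witnessDist (T : Set Node) (Lab : Node → Θ) (w : Node) : TreeFml Θ → ℕ
  | somewhere φ => distTo T (φ.Sat T Lab) w
  | _ => 0

/-- The progress measure of `toATA`. -/
noncomputable def rank (T : Set Node) (Lab : Node → Θ) (w : Node) (φ : TreeFml Θ) : ℕ ×ₗ ℕ :=
  toLex (sizeOf φ, witnessDist T Lab w φ)

theorem rank_lt_of_sizeOf_lt {φ ψ : TreeFml Θ} (h : sizeOf φ < sizeOf ψ) (w w' : Node) :
    rank T Lab w' φ < rank T Lab w ψ :=
  Prod.Lex.toLex_lt_toLex.2 (.inl h)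

theorem rank_somewhere_lt {φ : TreeFml Θ} {w w' : Node}
    (h : distTo T (φ.Sat T Lab) w' < distTo T (φ.Sat T Lab) w) :
    rank T Lab w' (somewhere φ) < rank T Lab w (somewhere φ) :=
  Prod.Lex.toLex_lt_toLex.2 (.inr ⟨rfl, h⟩)

theorem accepts_toATA_of_sat (hT : IsTree T) {φ : TreeFml Θ} (hφ : φ.Sat T Lab []) :
    Accepts φ.toATA T Lab := by
  refine accepts_of_progressMeasure hT (S := fun w ψ => ψ.1.Sat T Lab w)
    (fun w ψ => rank T Lab w ψ.1) hφ ?_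
  rintro w hw ⟨ψ, hψ⟩ hsat
  have descend {a : TreeFml Θ} (ha : sizeOf a < sizeOf ψ) {w' : Node} {P : Prop}
      (h : a.Sat T Lab w') : a.Sat T Lab w' ∧ (rank T Lab w' a < rank T Lab w ψ ∨ P) :=
    ⟨h, .inl (rank_lt_of_sizeOf_lt ha w w')⟩
  cases ψ with
  | lit p =>
    simp only [toATA, transition, if_pos (show p (Lab w) from hsat), PosBool.eval]
  | conj a b => exact ⟨descend (by simp +arith) hsat.1, descend (by simp +arith) hsat.2⟩
  | disj a b =>
    exact hsat.imp (descend (a := a) (by simp +arith)) (descend (a := b) (by simp +arith))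
  | modal m a =>
    exact (m.holds_map _).2 (Move.Holds.mono hsat fun _ _ _ => descend (a := a) (by simp +arith))
  | somewhere a =>
    obtain ⟨v, hv, hav⟩ := hsat
    obtain haw | ⟨hne, hlt⟩ | ⟨i, hi, hlt⟩ := hT.exists_distTo_lt hv hav hw
    · exact .inl (descend (by simp) haw)
    · exact .inr (.inl ⟨hne, ⟨v, hv, hav⟩, .inl (rank_somewhere_lt hlt)⟩)
    · exact .inr (.inr ⟨i, hi, ⟨v, hv, hav⟩, .inl (rank_somewhere_lt hlt)⟩)
  | everywhere a =>
    exact ⟨descend (by simp) (hsat w hw), .inr ⟨hsat, .inr ⟨rfl, le_rfl⟩⟩,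
      fun i _ => ⟨hsat, .inr ⟨rfl, le_rfl⟩⟩⟩

end Completeness

section Soundness

variable {φ : TreeFml Θ} {Tr : Set Node} {r : Node → Node × φ.State}

theorem visited_everywhere (hT : IsTree T) (hrun : IsRun φ.toATA T Lab Tr r)
    {a : TreeFml Θ} {ha : (everywhere a).subfmls ⊆ φ.subfmls} {v : Node}
    (hvis : Visited Tr r v ⟨everywhere a, ha⟩) : ∀ w ∈ T, Visited Tr r w ⟨everywhere a, ha⟩ := by
  refine hT.forall_of_edge_iff (fun w i hi => ⟨fun hwi => ?_, fun hw => ?_⟩)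
    (hrun.mem_of_visited hvis) hvis
  · obtain ⟨-, hup, -⟩ := hrun.eval_visited hwi
    simpa using hup.resolve_left (by simp)
  · obtain ⟨-, -, hbox⟩ := hrun.eval_visited hw
    exact hbox i hi

theorem sat_of_visited (hT : IsTree T) (hrun : IsRun φ.toATA T Lab Tr r)
    (hacc : ∀ π, IsRunPath Tr π → ParityAcc φ.toATA.prio fun n => (r (π n)).2) (ψ : TreeFml Θ)
    (hψ : ψ.subfmls ⊆ φ.subfmls) {w : Node} (hvis : Visited Tr r w ⟨ψ, hψ⟩) :
    ψ.Sat T Lab w := by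
  induction ψ generalizing w with
  | lit p =>
    have hδ := hrun.eval_visited hvis
    by_contra hp
    simp only [toATA, transition, if_neg (show ¬ p (Lab w) from hp), PosBool.eval] at hδ
  | conj a b iha ihb =>
    obtain ⟨ha, hb⟩ := hrun.eval_visited hvis
    exact ⟨iha _ ha, ihb _ hb⟩
  | disj a b iha ihb => exact (hrun.eval_visited hvis).imp (iha _) (ihb _)
  | modal m a ih =>
    exact ((m.holds_map _).1 (hrun.eval_visited hvis)).mono fun _ _ _ => ih _
  | somewhere a ih =>
    have hodd : ¬ Even (φ.toATA.prio ⟨somewhere a, hψ⟩) := Nat.not_even_one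
    obtain ⟨v, hv, ⟨ha, -⟩ | ⟨-, -, hne⟩ | ⟨_, -, -, hne⟩⟩ :=
      hrun.exists_eval_visited_ne hacc hodd hvis
    · exact ⟨v, hv, ih _ ha⟩
    · exact absurd rfl hne
    · exact absurd rfl hne
  | everywhere a ih =>
    intro v hv
    obtain ⟨ha, -⟩ := hrun.eval_visited (visited_everywhere hT hrun hvis v hv)
    exact ih _ ha

end Soundness

theorem accepts_toATA_iff (hT : IsTree T) (φ : TreeFml Θ) :
    Accepts φ.toATA T Lab ↔ φ.Sat T Lab [] := by
  refine ⟨?_, accepts_toATA_of_sat hT⟩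
  rintro ⟨Tr, r, hrun, hacc⟩
  exact sat_of_visited hT hrun hacc φ subset_rfl ⟨[], hrun.tree.nil_mem, hrun.root⟩

end TreeFml

end TA

namespace GFC

open TA

/-! ### From GF² to the modal logic -/

section Translation

variable {U B : Type}

theorem sat_congr {A : Str U B} {φ : Fml U B} {σ τ : Var → A.Dom}
    (h : ∀ v ∈ φ.free, σ v = τ v) : Sat A φ σ ↔ Sat A φ τ := by
  have upd_eq {ψ : Fml U B} {σ τ : Var → A.Dom} {v : Var} (h : ∀ w ∈ ψ.free \ {v}, σ w = τ w)
      (d : A.Dom) : ∀ w ∈ ψ.free, upd σ v d w = upd τ v d w := by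
    intro w hw
    by_cases hwv : w = v
    · simp [upd, hwv]
    · simpa [upd, hwv] using h w ⟨hw, hwv⟩
  induction φ generalizing σ τ with
  | uatom P v => simp only [Sat, h v rfl]
  | batom R v w => simp only [Sat, h v (.inl rfl), h w (.inr rfl)]
  | eqv v w => simp only [Sat, h v (.inl rfl), h w (.inr rfl)]
  | fls => rfl
  | neg φ ih => exact not_congr (ih h)
  | conj φ ψ ihφ ihψ =>
    exact and_congr (ihφ fun v hv => h v (.inl hv)) (ihψ fun v hv => h v (.inr hv))
  | disj φ ψ ihφ ihψ =>
    exact or_congr (ihφ fun v hv => h v (.inl hv)) (ihψ fun v hv => h v (.inr hv))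
  | impl φ ψ ihφ ihψ =>
    exact imp_congr (ihφ fun v hv => h v (.inl hv)) (ihψ fun v hv => h v (.inr hv))
  | all v φ ih => exact forall_congr' fun d => ih (upd_eq h d)
  | ex v φ ih => exact exists_congr fun d => ih (upd_eq h d)

theorem satS_iff_sat {A : Str U B} {φ : Fml U B} (hφ : φ.IsSentence) (σ : Var → A.Dom) :
    SatS A φ ↔ Sat A φ σ :=
  ⟨fun h => h σ, fun h _ =>
    (sat_congr fun v hv => (Set.eq_empty_iff_forall_notMem.1 hφ v hv).elim).2 h⟩

section RepresentedStructure

variable {SU : Set U} {SB : Set B} {T : Set Node} {hT : IsTree T}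
  {Lab : Node → TypeAlph U B SU SB} {R : B} {d d' : {w // w ∈ T}}

theorem mkStr_b_self : (mkStr SU SB T hT Lab).b R d d ↔ .ba R .y .y ∈ (Lab d.1).1.1 := by
  simp [mkStr]

theorem mkStr_b_parent_child {i : ℕ+} (h : d'.1 = d.1 ++ [i]) :
    (mkStr SU SB T hT Lab).b R d d' ↔ .ba R .x .y ∈ (Lab d'.1).1.1 := by
  have hne : d ≠ d' := fun heq => by simp [heq] at h
  simp [mkStr, hne, h]

theorem mkStr_b_child_parent {i : ℕ+} (h : d'.1 = d.1 ++ [i]) :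
    (mkStr SU SB T hT Lab).b R d' d ↔ .ba R .y .x ∈ (Lab d'.1).1.1 := by
  have hne : d' ≠ d := fun heq => by simp [heq] at h
  simp [mkStr, hne, h]

theorem mem_neighborhood_of_mkStr_b (h : (mkStr SU SB T hT Lab).b R d d') :
    d'.1 ∈ neighborhood T d.1 ∧ d.1 ∈ neighborhood T d'.1 := by
  obtain ⟨rfl, -⟩ | ⟨⟨i, hi⟩, -⟩ | ⟨⟨i, hi⟩, -⟩ := h
  · exact ⟨.inl (.inl rfl), .inl (.inl rfl)⟩
  · exact ⟨.inr ⟨d'.2, i, hi⟩, .inl (.inr (by simp [hi]))⟩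
  · exact ⟨.inl (.inr (by simp [hi])), .inr ⟨d.2, i, hi⟩⟩

theorem mem_neighborhood_of_sat_atom {α : Fml U B} (hα : α.IsAtom)
    {σ : Var → (mkStr SU SB T hT Lab).Dom} (h : Sat _ α σ) :
    ∀ u ∈ α.free, ∀ v ∈ α.free, (σ v).1 ∈ neighborhood T (σ u).1 := by
  have self_mem (u : Var) : (σ u).1 ∈ neighborhood T (σ u).1 := .inl (.inl rfl)
  cases α with
  | uatom P w =>
    rintro _ rfl _ rfl
    exact self_mem _
  | batom R w w' =>
    obtain ⟨hww', hw'w⟩ := mem_neighborhood_of_mkStr_b h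
    rintro _ (rfl | rfl) _ (rfl | rfl)
    exacts [self_mem _, hww', hw'w, self_mem _]
  | eqv w w' =>
    have heq : σ w = σ w' := h
    rintro _ (rfl | rfl) _ (rfl | rfl) <;> simp only [heq, self_mem]
  | _ => exact hα.elim

end RepresentedStructure

/-- Where the values of the two variables lie relative to a node `w`: both at `w`, or the variable
`c` at `w` and the other one at the predecessor of `w`. -/
inductive Placement : Type
  | together
  | child (c : Var)

namespace Placement

/-- The node at which the placement puts the variable `v`. -/
def node (w : Node) : Placement → Var → Node
  | together, _ => w
  | child c, v => if v = c then w else w.dropLast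

/-- The assignment `ν` is placed at `w` as prescribed. -/
def Located (w : Node) (ν : Var → Node) (p : Placement) : Prop :=
  (p ≠ together → w ≠ []) ∧ ∀ v, ν v = p.node w v

/-- The formula that evaluates `φ` at the value of the variable `v`. -/
def atVar {Θ : Type} (φ : TreeFml Θ) (v : Var) : Placement → TreeFml Θ
  | together => φ
  | child c => if v = c then φ else .modal (.up ()) φ

theorem Located.sat_atVar {Θ : Type} {p : Placement} {w : Node} {ν : Var → Node}
    (h : p.Located w ν) (φ : TreeFml Θ) (v : Var) {T : Set Node} {Lab : Node → Θ} :
    (p.atVar φ v).Sat T Lab w ↔ φ.Sat T Lab (ν v) := by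
  rw [h.2]
  cases p with
  | together => rfl
  | child c =>
    have hw : w ≠ [] := h.1 (by simp)
    by_cases hv : v = c <;> simp [atVar, node, hv, TreeFml.Sat, Move.Holds, hw]

theorem Located.eq_iff {p : Placement} {w : Node} {ν : Var → Node} (h : p.Located w ν)
    {u v : Var} : ν u = ν v ↔ p = together ∨ u = v := by
  cases p with
  | together => simp [h.2, node]
  | child c =>
    have hw : w.length ≠ w.length - 1 := by
      have := List.length_pos_iff.2 (h.1 (by simp))
      omega
    have hw' : w ≠ w.dropLast := fun heq => hw (by simpa using congrArg List.length heq)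
    cases c <;> cases u <;> cases v <;> simp [h.2, node, hw', hw'.symm]

theorem Located.child_eq {c : Var} {w : Node} {ν : Var → Node} (h : (child c).Located w ν) :
    ν c = w := by
  simp [h.2, node]

theorem Located.exists_child_eq_append {c u : Var} {w : Node} {ν : Var → Node}
    (h : (child c).Located w ν) (hu : u ≠ c) : ∃ i, ν c = ν u ++ [i] := by
  have hw : w ≠ [] := h.1 (by simp)
  exact ⟨w.getLast hw, by simp [h.2, node, hu, List.dropLast_append_getLast]⟩

theorem located_together {w : Node} {ν : Var → Node} (h : ∀ v, ν v = w) :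
    together.Located w ν :=
  ⟨fun hne => absurd rfl hne, h⟩

theorem located_child {c u : Var} (hcu : c ≠ u) {w : Node} {ν : Var → Node} (hw : w ≠ [])
    (hc : ν c = w) (hu : ν u = w.dropLast) : (child c).Located w ν := by
  refine ⟨fun _ => hw, fun v => ?_⟩
  cases c <;> cases u <;> cases v <;> simp_all [node]

end Placement

/-- For every placement, some formula of the tree logic evaluated at `w` expresses the truth of `φ`
in the represented structure under all assignments placed at `w`. -/
def Translatable (SU : Set U) (SB : Set B) (φ : Fml U B) : Prop :=
  ∀ p : Placement, ∃ ζ : TreeFml (TypeAlph U B SU SB), ∀ (T : Set Node) (hT : IsTree T)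
    (Lab : Node → TypeAlph U B SU SB) (w : Node) (σ : Var → (mkStr SU SB T hT Lab).Dom),
    p.Located w (fun v => (σ v).1) → (ζ.Sat T Lab w ↔ Sat (mkStr SU SB T hT Lab) φ σ)

namespace Translatable

variable {SU : Set U} {SB : Set B} {φ ψ : Fml U B}

theorem congr (hφ : Translatable SU SB φ) (h : ∀ A σ, Sat A φ σ ↔ Sat A ψ σ) :
    Translatable SU SB ψ := by
  intro p
  obtain ⟨ζ, hζ⟩ := hφ p
  exact ⟨ζ, fun T hT Lab w σ hσ => (hζ T hT Lab w σ hσ).trans (h _ σ)⟩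

theorem fls : Translatable SU SB (.fls : Fml U B) := fun _ =>
  ⟨.lit fun _ => False, fun _ _ _ _ _ _ => Iff.rfl⟩

theorem neg (hφ : Translatable SU SB φ) : Translatable SU SB φ.neg := by
  intro p
  obtain ⟨ζ, hζ⟩ := hφ p
  exact ⟨ζ.dual, fun T hT Lab w σ hσ => (ζ.sat_dual w).trans (not_congr (hζ T hT Lab w σ hσ))⟩

theorem conj (hφ : Translatable SU SB φ) (hψ : Translatable SU SB ψ) :
    Translatable SU SB (φ.conj ψ) := by
  intro p
  obtain ⟨ζ, hζ⟩ := hφ p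
  obtain ⟨ξ, hξ⟩ := hψ p
  exact ⟨.conj ζ ξ, fun T hT Lab w σ hσ => and_congr (hζ T hT Lab w σ hσ) (hξ T hT Lab w σ hσ)⟩

theorem disj (hφ : Translatable SU SB φ) (hψ : Translatable SU SB ψ) :
    Translatable SU SB (φ.disj ψ) :=
  ((hφ.neg.conj hψ.neg).neg).congr fun A σ => by simp only [Sat, not_and_or, not_not]

theorem impl (hφ : Translatable SU SB φ) (hψ : Translatable SU SB ψ) :
    Translatable SU SB (φ.impl ψ) :=
  (hφ.neg.disj hψ).congr fun A σ => by simp only [Sat, imp_iff_not_or]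

theorem eqv (u v : Var) : Translatable SU SB (.eqv u v : Fml U B) := fun p =>
  ⟨.lit fun _ => p = .together ∨ u = v,
    fun _ _ _ _ _ hσ => hσ.eq_iff.symm.trans Subtype.ext_iff.symm⟩

theorem uatom (P : U) (v : Var) : Translatable SU SB (.uatom P v : Fml U B) := fun p =>
  ⟨p.atVar (.lit fun θ => .ua P .y ∈ θ.1.1) v, fun _ _ _ _ _ hσ => hσ.sat_atVar _ v⟩

theorem batom (R : B) (u v : Var) : Translatable SU SB (.batom R u v : Fml U B) := by
  intro p
  by_cases hp : p = .together ∨ u = v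
  · refine ⟨p.atVar (.lit fun θ => .ba R .y .y ∈ θ.1.1) u, fun T hT Lab w σ hσ => ?_⟩
    have huv : σ u = σ v := Subtype.ext (hσ.eq_iff.2 hp)
    rw [hσ.sat_atVar, Sat, ← huv]
    exact mkStr_b_self.symm
  obtain ⟨hne, huv⟩ := not_or.1 hp
  cases p with
  | together => exact absurd rfl hne
  | child c =>
    by_cases hcu : c = u
    · subst hcu
      refine ⟨.lit fun θ => .ba R .y .x ∈ θ.1.1, fun T hT Lab w σ hσ => ?_⟩
      obtain ⟨i, hi⟩ := hσ.exists_child_eq_append (Ne.symm huv)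
      rw [← hσ.child_eq]
      exact (mkStr_b_child_parent hi).symm
    · obtain rfl : c = v := by cases c <;> cases u <;> cases v <;> simp_all
      refine ⟨.lit fun θ => .ba R .x .y ∈ θ.1.1, fun T hT Lab w σ hσ => ?_⟩
      obtain ⟨i, hi⟩ := hσ.exists_child_eq_append huv
      rw [← hσ.child_eq]
      exact (mkStr_b_parent_child hi).symm

theorem ex_of_free_subset {v : Var} (hφ : Translatable SU SB φ) (hfree : φ.free ⊆ {v}) :
    Translatable SU SB (φ.ex v) := by
  intro p
  obtain ⟨ζ, hζ⟩ := hφ .together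
  refine ⟨.somewhere ζ, fun T hT Lab w σ _ => ?_⟩
  have hconst (d : (mkStr SU SB T hT Lab).Dom) :
      ζ.Sat T Lab d.1 ↔ Sat (mkStr SU SB T hT Lab) φ (upd σ v d) := by
    rw [hζ T hT Lab d.1 (fun _ => d) (Placement.located_together fun _ => rfl)]
    refine sat_congr fun u hu => ?_
    simp [upd, Set.mem_singleton_iff.1 (hfree hu)]
  exact ⟨fun ⟨w', hw', h⟩ => ⟨⟨w', hw'⟩, (hconst ⟨w', hw'⟩).1 h⟩,
    fun ⟨d, h⟩ => ⟨d.1, d.2, (hconst d).2 h⟩⟩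

theorem ex_of_neighborhood {u v : Var} (huv : u ≠ v) (hφ : Translatable SU SB φ)
    (hguard : ∀ (T : Set Node) (hT : IsTree T) (Lab : Node → TypeAlph U B SU SB)
      (σ : Var → (mkStr SU SB T hT Lab).Dom), Sat _ φ σ → (σ v).1 ∈ neighborhood T (σ u).1) :
    Translatable SU SB (φ.ex v) := by
  intro p
  obtain ⟨ζ, hζ⟩ := hφ .together
  obtain ⟨ζv, hζv⟩ := hφ (.child v)
  obtain ⟨ζu, hζu⟩ := hφ (.child u)
  refine ⟨p.atVar (.disj ζ (.disj (.modal (.dia ()) ζv)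
    (.conj (.modal (.up ()) (.lit fun _ => True)) ζu))) u, fun T hT Lab w σ hσ => ?_⟩
  rw [hσ.sat_atVar]
  have upd_self (d : (mkStr SU SB T hT Lab).Dom) : (upd σ v d v).1 = d.1 := by simp [upd]
  have upd_other (d : (mkStr SU SB T hT Lab).Dom) : (upd σ v d u).1 = (σ u).1 := by
    simp [upd, huv]
  refine Iff.trans ?_ (hT.exists_iff_of_forall_mem_neighborhood (e := σ u) fun d hd => ?_).symm
  · refine or_congr ?_ (or_congr ?_ ?_)
    · refine hζ T hT Lab _ _ (Placement.located_together fun t => ?_)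
      simp only [upd]
      cases t <;> cases u <;> cases v <;> simp_all
    · have at_child (i : ℕ+) (hi : (σ u).1 ++ [i] ∈ T) :=
        hζv T hT Lab _ (upd σ v ⟨_, hi⟩) (Placement.located_child huv.symm
          (by simp) (upd_self _) ((upd_other _).trans List.dropLast_concat.symm))
      exact exists_congr fun i => ⟨fun ⟨hi, h⟩ => ⟨hi, (at_child i hi).1 h⟩,
        fun ⟨hi, h⟩ => ⟨hi, (at_child i hi).2 h⟩⟩
    · have at_parent (hne : (σ u).1 ≠ []) :=
        hζu T hT Lab _ (upd σ v ⟨_, hT.dropLast_mem (σ u).2⟩)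
          (Placement.located_child huv hne (upd_other _) (upd_self _))
      exact ⟨fun ⟨⟨hne, _⟩, h⟩ => ⟨hne, (at_parent hne).1 h⟩,
        fun ⟨hne, h⟩ => ⟨⟨hne, trivial⟩, (at_parent hne).2 h⟩⟩
  · exact upd_self d ▸ upd_other d ▸ hguard T hT Lab _ hd

theorem ex_guarded {v : Var} {α : Fml U B} (hα : α.IsAtom) (hαT : Translatable SU SB α)
    (hφ : Translatable SU SB φ) (hfree : φ.free ∪ {v} ⊆ α.free) :
    Translatable SU SB (.ex v (.conj α φ)) := by
  by_cases hu : ∃ u ∈ α.free, u ≠ v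
  · obtain ⟨u, hu, huv⟩ := hu
    exact (hαT.conj hφ).ex_of_neighborhood huv fun T hT Lab σ h =>
      mem_neighborhood_of_sat_atom hα h.1 u hu v (hfree (.inr rfl))
  · push Not at hu
    exact (hαT.conj hφ).ex_of_free_subset
      (Set.union_subset hu fun u hu' => hu u (hfree (.inl hu')))

end Translatable

theorem translatable_of_isGF2 {SU : Set U} {SB : Set B} {φ : Fml U B} (hφ : IsGF2 φ) :
    Translatable SU SB φ := by
  have of_isAtom {α : Fml U B} (hα : α.IsAtom) : Translatable SU SB α := by
    cases α with
    | uatom P v => exact .uatom P v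
    | batom R u v => exact .batom R u v
    | eqv u v => exact .eqv u v
    | _ => exact hα.elim
  induction hφ with
  | uatom P v => exact .uatom P v
  | batom R v w => exact .batom R v w
  | eqv v w => exact .eqv v w
  | fls => exact .fls
  | neg _ ih => exact ih.neg
  | conj _ _ ihφ ihψ => exact ihφ.conj ihψ
  | disj _ _ ihφ ihψ => exact ihφ.disj ihψ
  | impl _ _ ihφ ihψ => exact ihφ.impl ihψ
  | exG hα _ hfree ih => exact (of_isAtom hα).ex_guarded hα ih hfree
  | allG hα _ hfree ih =>
    exact ((of_isAtom hα).ex_guarded hα ih.neg hfree).neg.congr fun A σ => by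
      simp only [Sat, not_exists, not_and, not_not]

theorem exists_ata_recognizing_models_of_gf2_sentence_general {φ : Fml U B} (hgf : IsGF2 φ)
    (hsen : φ.IsSentence) (SU : Set U) (SB : Set B) :
    ∃ (Q : Type) (_ : Finite Q) (A : ATA Q (TypeAlph U B SU SB)),
      ∀ (T : Set Node) (hT : IsTree T) (Lab : Node → TypeAlph U B SU SB),
        Accepts A T Lab ↔ SatS (mkStr SU SB T hT Lab) φ := by
  obtain ⟨ζ, hζ⟩ := translatable_of_isGF2 (SU := SU) (SB := SB) hgf .together
  refine ⟨ζ.State, inferInstance, ζ.toATA, fun T hT Lab => ?_⟩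
  let σ : Var → (mkStr SU SB T hT Lab).Dom := fun _ => ⟨[], hT.nil_mem⟩
  calc Accepts ζ.toATA T Lab
    _ ↔ ζ.Sat T Lab [] := ζ.accepts_toATA_iff hT
    _ ↔ Sat _ φ σ := hζ T hT Lab [] σ (Placement.located_together fun _ => rfl)
    _ ↔ SatS _ φ := (satS_iff_sat hsen σ).symm

end Translation

/-- for every GF² sentence `φ₁` there is a 2ATA `𝒜₁` over
the alphabet of pairs (atomic 2-type for `sig φ₁`, marker bit) that accepts a
`Θ`-labeled tree `(T, L)` iff the represented structure `𝔄_{(T,L)}` is a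
model of `φ₁`. -/
theorem exists_ata_recognizing_models_of_gf2_sentence
    {U B : Type} (φ₁ : Fml U B) (hgf : IsGF2 φ₁) (hsen : φ₁.IsSentence) :
    ∃ (Q : Type) (_ : Finite Q)
      (A₁ : TA.ATA Q (TypeAlph U B φ₁.upreds φ₁.bpreds)),
      ∀ (T : Set TA.Node) (hT : TA.IsTree T)
        (Lab : TA.Node → TypeAlph U B φ₁.upreds φ₁.bpreds),
        TA.Accepts A₁ T Lab ↔ SatS (mkStr φ₁.upreds φ₁.bpreds T hT Lab) φ₁ :=
  exists_ata_recognizing_models_of_gf2_sentence_general hgf hsen _ _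

end GFC
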